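/- arXiv:1804.10050 — 2 statements merged into one kernel-verified Lean document; each statement's English description precedes it below -/
import Mathlib

section
/- Let F be a family of subsets of {1,…,n} that contains no sunflower with 3 petals. Then |F| ≤ 3·(n+1)·∑_{i=0}^{⌊n/3⌋} C(n, i), where C(n, i) is the binomial coefficient. -/
/-- Three (distinct) sets form a sunflower with 3 petals. -/
def IsThreeSunflower {α : Type*} [DecidableEq α] (A B C : Finset α) : Prop :=
  A ∩ B = A ∩ B ∩ C ∧ A ∩ C = A ∩ B ∩ C ∧ B ∩ C = A ∩ B ∩ C

/-- A family of sets is sunflower-free if no three distinct members form a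
sunflower with 3 petals. -/
def SunflowerFree {α : Type*} [DecidableEq α] (F : Finset (Finset α)) : Prop :=
  ¬ ∃ A ∈ F, ∃ B ∈ F, ∃ C ∈ F, A ≠ B ∧ A ≠ C ∧ B ≠ C ∧ IsThreeSunflower A B C

/-!
Group the sets of the family by size, so that each group is an antichain `G`. For `A, B, C ∈ G` put
`T A B C = ∏ i, (2 - 1_A i - 1_B i - 1_C i)`. A factor vanishes exactly when `i` lies in two of the
three sets but not in the third, so `T A B C ≠ 0` exactly when `A, B, C` is a sunflower or satisfies
a degenerate form of the sunflower condition, such as `A = B ⊆ C`. In a sunflower-free antichain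
this leaves only `A = B = C`: the tensor `T` is diagonal, and by Tao's lemma its slice rank is `#G`.
Expanding the product, every monomial has degree at most `n / 3` in one of the three variables,
which bounds the slice rank by three times the number of sets of size at most `n / 3`.
-/

open Finset Module
open scoped Matrix

section FunctionSpaces

variable {K X : Type*} [Field K]

lemma exists_mem_finrank_le_ncard_support [Finite X] (V : Submodule K (X → K)) :
    ∃ h ∈ V, finrank K V ≤ (Function.support h).ncard := by
  obtain ⟨h, hV, hmax⟩ := Set.Finite.exists_maximalFor' Function.support (V : Set (X → K))
    (Set.toFinite _) V.nonempty
  refine ⟨h, hV, ?_⟩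
  -- A nonzero `u ∈ V` vanishing on the support of `h` would make `h + u` have a larger support.
  have hdisj : Disjoint V (Pi.spanSubset K (Function.support h)ᶜ) := by
    refine Submodule.disjoint_def.2 fun u huV hu ↦ funext fun x ↦ ?_
    rw [Pi.mem_spanSubset_iff] at hu
    have hsub : Function.support h ⊆ Function.support (h + u) := fun y hy ↦ by
      simpa [hu y (not_not.2 hy)] using hy
    by_cases hx : x ∈ Function.support h
    · exact hu x (not_not.2 hx)
    · have hxu : x ∉ Function.support (h + u) := fun hc ↦ hx (hmax (V.add_mem hV huV) hsub hc)
      simpa [Function.notMem_support.1 hx] using hxu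
  have hdim := Submodule.finrank_add_finrank_le_of_disjoint hdisj
  have := Fintype.ofFinite X
  rw [Pi.dim_spanSubset, finrank_fintype_fun_eq_card, Fintype.card_eq_nat_card,
    ← Set.ncard_add_ncard_compl (Function.support h)] at hdim
  omega

variable [Fintype X]

lemma exists_finrank_add_eq_card_dotProduct_eq_zero (V : Submodule K (X → K)) :
    ∃ W : Submodule K (X → K),
      finrank K V + finrank K W = Fintype.card X ∧ ∀ v ∈ V, ∀ w ∈ W, w ⬝ᵥ v = 0 := by
  classical
  let e := dotProductEquiv K X
  refine ⟨V.dualAnnihilator.map (e.symm : Dual K (X → K) →ₗ[K] X → K), ?_, ?_⟩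
  · rw [LinearEquiv.finrank_map_eq, Subspace.finrank_add_finrank_dualAnnihilator_eq,
      finrank_fintype_fun_eq_card]
  · rintro v hv _ ⟨φ, hφ, rfl⟩
    have hdot : e (e.symm φ) v = 0 := by
      rw [e.apply_symm_apply]
      exact (Submodule.mem_dualAnnihilator φ).1 hφ v hv
    exact hdot

lemma finrank_add_finrank_le_of_mul_mem {V₁ V₂ V₃ : Submodule K (X → K)} {d : X → K}
    (hd : ∀ x, d x ≠ 0) (hmul : ∀ f ∈ V₁, ∀ g ∈ V₂, d * f * g ∈ V₃) :
    finrank K V₁ + finrank K V₂ ≤ Fintype.card X + finrank K V₃ := by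
  obtain ⟨f, hf, hfV₁⟩ := exists_mem_finrank_le_ncard_support V₁
  let μ : V₂ →ₗ[K] V₃ := (LinearMap.mulLeft K (d * f)).restrict (hmul f hf)
  have hker : μ.ker.map V₂.subtype ≤ Pi.spanSubset K (Function.support f)ᶜ := by
    rintro _ ⟨g, hg, rfl⟩
    rw [Pi.mem_spanSubset_iff]
    intro x hx
    have hfx : f x ≠ 0 := not_not.1 hx
    have hgx : d x * f x * (g : X → K) x = 0 :=
      congrFun (congrArg Subtype.val (LinearMap.mem_ker.1 hg)) x
    simpa [hd x, hfx] using hgx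
  have hker_dim : finrank K μ.ker ≤ (Function.support f)ᶜ.ncard := by
    rw [← Pi.dim_spanSubset (R := K), ← Submodule.finrank_map_subtype_eq]
    exact Submodule.finrank_mono hker
  have hrange_dim : finrank K μ.range ≤ finrank K V₃ := μ.range.finrank_le
  have hrank_nullity := μ.finrank_range_add_finrank_ker
  have hcompl := Set.ncard_add_ncard_compl (Function.support f)
  rw [← Fintype.card_eq_nat_card] at hcompl
  omega

end FunctionSpaces

section SliceRank

variable {K X Y Z : Type*} [CommSemiring K]

/-- The tensors `X → Y → Z → K` that are sums of slices along `V₁`, `V₂` and `V₃`. For finite `X`,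
`Y`, `Z` over a field this is the sum of `V₁ ⊗ K^(Y × Z)`, `V₂ ⊗ K^(X × Z)` and `V₃ ⊗ K^(X × Y)`;
each summand is encoded by requiring all fibers in the respective direction to lie in `Vᵢ`. The
slice rank of `T` is then the least value of `dim V₁ + dim V₂ + dim V₃` for which `T` belongs to
this space. -/
def sliceSubmodule (V₁ : Submodule K (X → K)) (V₂ : Submodule K (Y → K))
    (V₃ : Submodule K (Z → K)) : Submodule K (X → Y → Z → K) :=
  Submodule.span K {T | (∀ y z, (fun x ↦ T x y z) ∈ V₁) ∨
    (∀ x z, (fun y ↦ T x y z) ∈ V₂) ∨ ∀ x y, (fun z ↦ T x y z) ∈ V₃}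

variable [Fintype X] [Fintype Y]

/-- The contraction of a tensor with `f` in its first and with `g` in its second variable. -/
def contraction (f : X → K) (g : Y → K) : (X → Y → Z → K) →ₗ[K] (Z → K) where
  toFun T z := ∑ x, ∑ y, f x * g y * T x y z
  map_add' S T := by ext z; simp [mul_add, sum_add_distrib]
  map_smul' c T := by ext z; simp [mul_sum, mul_left_comm]

lemma contraction_mem_of_mem_sliceSubmodule {V₁ : Submodule K (X → K)} {V₂ : Submodule K (Y → K)}
    {V₃ : Submodule K (Z → K)} {T : X → Y → Z → K} (hT : T ∈ sliceSubmodule V₁ V₂ V₃)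
    {f : X → K} {g : Y → K} (hf : ∀ v ∈ V₁, f ⬝ᵥ v = 0) (hg : ∀ v ∈ V₂, g ⬝ᵥ v = 0) :
    contraction f g T ∈ V₃ := by
  suffices hle : sliceSubmodule V₁ V₂ V₃ ≤ V₃.comap (contraction f g) from hle hT
  refine Submodule.span_le.2 ?_
  rintro S (hS | hS | hS)
  · have hzero : contraction f g S = 0 := funext fun z ↦ calc
      ∑ x, ∑ y, f x * g y * S x y z = ∑ y, g y * ∑ x, f x * S x y z := by
        rw [sum_comm]
        exact sum_congr rfl fun y _ ↦ by rw [mul_sum]; exact sum_congr rfl fun x _ ↦ by ring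
      _ = 0 := sum_eq_zero fun y _ ↦ mul_eq_zero_of_right _ (hf _ (hS y z))
    simp [hzero]
  · have hzero : contraction f g S = 0 := funext fun z ↦ calc
      ∑ x, ∑ y, f x * g y * S x y z = ∑ x, f x * ∑ y, g y * S x y z := by
        simp only [mul_sum, mul_assoc]
      _ = 0 := sum_eq_zero fun x _ ↦ mul_eq_zero_of_right _ (hg _ (hS x z))
    simp [hzero]
  · have hsum : contraction f g S = ∑ x, ∑ y, (f x * g y) • S x y := by
      ext z
      simp [contraction]
    rw [SetLike.mem_coe, Submodule.mem_comap, hsum]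
    exact V₃.sum_mem fun x _ ↦ V₃.sum_mem fun y _ ↦ V₃.smul_mem _ (hS x y)

lemma contraction_apply_of_diagonal {T : X → X → X → K}
    (hT : ∀ x y z, T x y z ≠ 0 → x = y ∧ y = z) (f g : X → K) (z : X) :
    contraction f g T z = T z z z * f z * g z := by
  have hzero : ∀ x y, ¬ (x = z ∧ y = z) → f x * g y * T x y z = 0 := fun x y hxy ↦ by
    rw [not_not.1 fun h ↦ hxy ⟨(hT x y z h).1.trans (hT x y z h).2, (hT x y z h).2⟩, mul_zero]
  calc ∑ x, ∑ y, f x * g y * T x y z = ∑ y, f z * g y * T z y z :=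
        Fintype.sum_eq_single z fun x hx ↦ sum_eq_zero fun y _ ↦ hzero x y fun h ↦ hx h.1
    _ = f z * g z * T z z z := Fintype.sum_eq_single z fun y hy ↦ hzero z y fun h ↦ hy h.2
    _ = T z z z * f z * g z := by ring

end SliceRank

theorem card_le_finrank_of_diagonal_mem_sliceSubmodule {K X : Type*} [Field K] [Fintype X]
    {V₁ V₂ V₃ : Submodule K (X → K)} {T : X → X → X → K} (hT : T ∈ sliceSubmodule V₁ V₂ V₃)
    (hdiag : ∀ x y z, T x y z ≠ 0 ↔ x = y ∧ y = z) :
    Fintype.card X ≤ finrank K V₁ + finrank K V₂ + finrank K V₃ := by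
  obtain ⟨W₁, hdim₁, hW₁⟩ := exists_finrank_add_eq_card_dotProduct_eq_zero V₁
  obtain ⟨W₂, hdim₂, hW₂⟩ := exists_finrank_add_eq_card_dotProduct_eq_zero V₂
  have hmul : ∀ f ∈ W₁, ∀ g ∈ W₂, (fun z ↦ T z z z) * f * g ∈ V₃ := fun f hf g hg ↦ by
    have hcontr : contraction f g T = (fun z ↦ T z z z) * f * g :=
      funext (contraction_apply_of_diagonal (fun x y z ↦ (hdiag x y z).1) f g)
    rw [← hcontr]
    exact contraction_mem_of_mem_sliceSubmodule hT (fun v hv ↦ hW₁ v hv f hf)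
      (fun v hv ↦ hW₂ v hv g hg)
  have hle := finrank_add_finrank_le_of_mul_mem (fun z ↦ (hdiag z z z).2 ⟨rfl, rfl⟩) hmul
  omega

section Monomials

variable {K X Y Z α : Type*}

/-- The functions on `X` that are multilinear polynomials of degree at most `k` in the functions
`u i`. -/
def monomialSpan [CommSemiring K] (u : α → X → K) (k : ℕ) : Submodule K (X → K) :=
  Submodule.span K ((fun A : Finset α ↦ ∏ i ∈ A, u i) '' {A | #A ≤ k})

lemma prod_mem_monomialSpan [CommSemiring K] (u : α → X → K) {k : ℕ} {A : Finset α} (hA : #A ≤ k) :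
    ∏ i ∈ A, u i ∈ monomialSpan u k :=
  Submodule.subset_span ⟨A, hA, rfl⟩

variable [Fintype α]

variable (α) in
lemma card_filter_card_le (k : ℕ) :
    #{A : Finset α | #A ≤ k} ≤ ∑ i ∈ range (k + 1), (Fintype.card α).choose i := by
  classical
  simp_rw [← card_univ (α := α), ← card_powersetCard]
  refine (card_le_card fun A hA ↦ mem_biUnion.2 ⟨#A, ?_, ?_⟩).trans card_biUnion_le
  · exact mem_range_succ_iff.2 (mem_filter.1 hA).2
  · exact mem_powersetCard_univ.2 rfl

lemma finrank_monomialSpan_le [Field K] (u : α → X → K) (k : ℕ) :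
    finrank K (monomialSpan u k) ≤ ∑ i ∈ range (k + 1), (Fintype.card α).choose i := by
  classical
  have hspan : monomialSpan u k = Submodule.span K
      (({A : Finset α | #A ≤ k} : Finset (Finset α)).image fun A ↦ ∏ i ∈ A, u i : Set (X → K)) := by
    simp [monomialSpan]
  rw [hspan]
  exact (finrank_span_finset_le_card _).trans (card_image_le.trans (card_filter_card_le α k))

lemma prod_add_add_mem_sliceSubmodule [CommSemiring K] (u : α → X → K) (v : α → Y → K)
    (w : α → Z → K) {k₁ k₂ k₃ : ℕ} (hk : Fintype.card α ≤ k₁ + k₂ + k₃ + 2) :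
    (fun x y z ↦ ∏ i, (u i x + v i y + w i z)) ∈
      sliceSubmodule (monomialSpan u k₁) (monomialSpan v k₂) (monomialSpan w k₃) := by
  classical
  have hexpand : (fun x y z ↦ ∏ i, (u i x + v i y + w i z)) = ∑ A : Finset α,
      ∑ B ∈ Aᶜ.powerset, fun x y z ↦
        (∏ i ∈ A, u i x) * ((∏ i ∈ B, v i y) * ∏ i ∈ Aᶜ \ B, w i z) := by
    ext x y z
    simp only [add_assoc, Fintype.prod_add, prod_add _ _ (_ᶜ), mul_sum, Finset.sum_apply]
  rw [hexpand]
  refine Submodule.sum_mem _ fun A _ ↦ Submodule.sum_mem _ fun B hB ↦ Submodule.subset_span ?_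
  have hcard : #A + #B + #(Aᶜ \ B) = Fintype.card α := by
    rw [add_assoc, add_comm #B, card_sdiff_add_card_eq_card (mem_powerset.1 hB),
      card_add_card_compl]
  have hsmall : #A ≤ k₁ ∨ #B ≤ k₂ ∨ #(Aᶜ \ B) ≤ k₃ := by omega
  refine hsmall.imp (fun hA y z ↦ ?_) (Or.imp (fun hB x z ↦ ?_) fun hC x y ↦ ?_)
  · convert (monomialSpan u k₁).smul_mem ((∏ i ∈ B, v i y) * ∏ i ∈ Aᶜ \ B, w i z)
      (prod_mem_monomialSpan u hA) using 1
    ext x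
    simp [mul_comm]
  · convert (monomialSpan v k₂).smul_mem ((∏ i ∈ A, u i x) * ∏ i ∈ Aᶜ \ B, w i z)
      (prod_mem_monomialSpan v hB) using 1
    ext y
    simp [mul_comm, mul_left_comm]
  · convert (monomialSpan w k₃).smul_mem ((∏ i ∈ A, u i x) * ∏ i ∈ B, v i y)
      (prod_mem_monomialSpan w hC) using 1
    ext z
    simp [mul_assoc]

end Monomials

section Sunflowers

variable {α : Type*} [DecidableEq α] {A B C : Finset α} {F G : Finset (Finset α)}

lemma isThreeSunflower_self_left : IsThreeSunflower A A C ↔ A ⊆ C := by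
  simp [IsThreeSunflower, eq_comm (a := A)]

lemma isThreeSunflower_self_right : IsThreeSunflower A B B ↔ B ⊆ A := by
  simp [IsThreeSunflower, eq_comm (a := B)]

lemma isThreeSunflower_self_outer : IsThreeSunflower A B A ↔ A ⊆ B := by
  simp [IsThreeSunflower, inter_comm B A, eq_comm (a := A)]

lemma SunflowerFree.mono (hF : SunflowerFree F) (hGF : G ⊆ F) : SunflowerFree G :=
  fun ⟨A, hA, B, hB, C, hC, h⟩ ↦ hF ⟨A, hGF hA, B, hGF hB, C, hGF hC, h⟩

lemma SunflowerFree.isThreeSunflower_iff (hF : SunflowerFree F)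
    (hanti : IsAntichain (· ⊆ ·) (F : Set (Finset α))) (hA : A ∈ F) (hB : B ∈ F) (hC : C ∈ F) :
    IsThreeSunflower A B C ↔ A = B ∧ B = C := by
  refine ⟨fun h ↦ ?_, ?_⟩
  · by_cases hAB : A = B
    · subst hAB
      exact ⟨rfl, hanti.eq hA hC (isThreeSunflower_self_left.1 h)⟩
    by_cases hBC : B = C
    · subst hBC
      exact ⟨(hanti.eq hB hA (isThreeSunflower_self_right.1 h)).symm, rfl⟩
    by_cases hAC : A = C
    · subst hAC
      exact absurd (hanti.eq hA hB (isThreeSunflower_self_outer.1 h)) hAB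
    exact absurd ⟨A, hA, B, hB, C, hC, hAB, hAC, hBC, h⟩ hF
  · rintro ⟨rfl, rfl⟩
    exact isThreeSunflower_self_left.2 Subset.rfl

variable [Fintype α]

/-- The tensor that detects sunflowers: a factor vanishes exactly when `i` lies in two of the three
sets but not in the third. The constant `2` is put into the third summand, so that the product has
the form `∏ i, (u i A + v i B + w i C)`. -/
def sunflowerTensor (A B C : Finset α) : ℚ :=
  ∏ i, ((if i ∈ A then -1 else 0) + (if i ∈ B then -1 else 0) + (if i ∈ C then 1 else 2))

lemma sunflowerTensor_ne_zero_iff : sunflowerTensor A B C ≠ 0 ↔ IsThreeSunflower A B C := by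
  simp only [sunflowerTensor, prod_ne_zero_iff, IsThreeSunflower, Finset.ext_iff, mem_inter,
    ← forall_and, mem_univ, true_imp_iff]
  refine forall_congr' fun i ↦ ?_
  by_cases hA : i ∈ A <;> by_cases hB : i ∈ B <;> by_cases hC : i ∈ C <;>
    simp [hA, hB, hC] <;> norm_num

theorem SunflowerFree.card_le_of_isAntichain (hF : SunflowerFree F)
    (hanti : IsAntichain (· ⊆ ·) (F : Set (Finset α))) :
    #F ≤ 3 * ∑ i ∈ range (Fintype.card α / 3 + 1), (Fintype.card α).choose i := by
  let u : α → F → ℚ := fun i A ↦ if i ∈ A.1 then -1 else 0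
  let w : α → F → ℚ := fun i A ↦ if i ∈ A.1 then 1 else 2
  have hmem : (fun A B C : F ↦ sunflowerTensor A.1 B.1 C.1) ∈ sliceSubmodule
      (monomialSpan u (Fintype.card α / 3)) (monomialSpan u (Fintype.card α / 3))
      (monomialSpan w (Fintype.card α / 3)) :=
    prod_add_add_mem_sliceSubmodule u u w (by omega)
  have hdiag : ∀ A B C : F, sunflowerTensor A.1 B.1 C.1 ≠ 0 ↔ A = B ∧ B = C := fun A B C ↦ by
    rw [sunflowerTensor_ne_zero_iff, hF.isThreeSunflower_iff hanti A.2 B.2 C.2, Subtype.ext_iff,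
      Subtype.ext_iff]
  have hcard := card_le_finrank_of_diagonal_mem_sliceSubmodule hmem hdiag
  have hu := finrank_monomialSpan_le u (Fintype.card α / 3)
  have hw := finrank_monomialSpan_le w (Fintype.card α / 3)
  rw [Fintype.card_coe] at hcard
  omega

end Sunflowers

theorem naslund_sawin_set_bound_general {α : Type*} [Fintype α] [DecidableEq α]
    {F : Finset (Finset α)} (hF : SunflowerFree F) :
    #F ≤ 3 * (Fintype.card α + 1) *
      ∑ i ∈ range (Fintype.card α / 3 + 1), (Fintype.card α).choose i := by
  set n := Fintype.card α
  set S := ∑ i ∈ range (n / 3 + 1), n.choose i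
  calc #F = ∑ r ∈ Iic n, #(F # r) := (sum_card_slice F).symm
    _ ≤ ∑ r ∈ Iic n, 3 * S := sum_le_sum fun r _ ↦
        (hF.mono slice_subset).card_le_of_isAntichain sized_slice.isAntichain
    _ = 3 * (n + 1) * S := by
        rw [sum_const, Nat.card_Iic, smul_eq_mul]
        ring

theorem naslund_sawin_set_bound (n : ℕ) (F : Finset (Finset (Fin n)))
    (hF : SunflowerFree F) :
    F.card ≤ 3 * (n + 1) * ∑ i ∈ Finset.range (n / 3 + 1), n.choose i := by
  simpa only [Fintype.card_fin] using naslund_sawin_set_bound_general hF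
end

section
/- Let p > 2 be an odd prime and n ≥ 1 an integer. Every sunflower-free family F ⊆ (ℤ_p)^n satisfies |F| ≤ (J(p)·p)^n, where J(q) := (1/q)·inf_{0<x<1} ((1 − x^q)/(1 − x))·x^{−(q−1)/3}. -/
/-- Exactly two of `a`, `b`, `c` are equal. -/
def ExactlyTwoEq {β : Type*} (a b c : β) : Prop :=
  (a = b ∧ a ≠ c) ∨ (a = c ∧ a ≠ b) ∨ (b = c ∧ a ≠ b)

/-- A family `F ⊆ (ℤ_D)^n` is sunflower-free if for every three distinct members
there is a coordinate where exactly two of the three entries agree. -/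
def SunflowerFreeZMod (D n : ℕ) (F : Finset (Fin n → ZMod D)) : Prop :=
  ∀ x ∈ F, ∀ y ∈ F, ∀ z ∈ F, x ≠ y → y ≠ z → x ≠ z →
    ∃ i : Fin n, ExactlyTwoEq (x i) (y i) (z i)

/-- The Ellenberg–Gijswijt constant
`J(q) = (1/q) · inf_{0<x<1} ((1 - x^q)/(1 - x)) · x^{-(q-1)/3}`. -/
noncomputable def egJ (q : ℝ) : ℝ :=
  (1 / q) * sInf {y : ℝ | ∃ x : ℝ, 0 < x ∧ x < 1 ∧
    y = ((1 - x ^ q) / (1 - x)) * x ^ (-(q - 1) / 3)}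

/-!
On a 3AP-free set `F ⊆ K ^ ι`, with `q = |K|`, the diagonal tensor is the product over `i` of
`1 - (x i + z i - 2 * y i) ^ (q - 1)`. Every monomial of this product has total degree at most
`(q - 1) * |ι|`, so its degree in one of `x`, `y`, `z` is at most a third of that; hence the
diagonal tensor is a sum of few slices, whereas a diagonal tensor on `F` needs `|F|` of them.
This bounds `|F|` by three times the number of monomials of low degree, which is estimated by
Chernoff's method (weight each monomial by a power of `x < 1`). Applying the bound to all
Cartesian powers of `F` removes the factor three.
-/

open Finset MvPolynomial

section SliceSpan

variable {R α β γ M₁ M₂ M₃ : Type*} [CommSemiring R] [Fintype M₁] [Fintype M₂] [Fintype M₃]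

/-- The tensors that are sums of slices `f₁ m x * g y z`, `f₂ m y * g x z` and `f₃ m z * g x y`,
where the one-variable factors are taken from the given families and the two-variable factors `g`
are arbitrary. Its elements have slice rank at most `|M₁| + |M₂| + |M₃|` in the sense of Tao. -/
def sliceSpan (f₁ : M₁ → α → R) (f₂ : M₂ → β → R) (f₃ : M₃ → γ → R) :
    Submodule R (α → β → γ → R) where
  carrier := {T | ∃ (g₁ : M₁ → β → γ → R) (g₂ : M₂ → α → γ → R) (g₃ : M₃ → α → β → R),
    ∀ x y z, T x y z =
      ∑ m, f₁ m x * g₁ m y z + ∑ m, f₂ m y * g₂ m x z + ∑ m, f₃ m z * g₃ m x y}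
  zero_mem' := ⟨0, 0, 0, by simp⟩
  add_mem' := by
    rintro T T' ⟨g₁, g₂, g₃, h⟩ ⟨g₁', g₂', g₃', h'⟩
    refine ⟨g₁ + g₁', g₂ + g₂', g₃ + g₃', fun x y z => ?_⟩
    simp only [Pi.add_apply, h, h', mul_add, sum_add_distrib]
    ring
  smul_mem' := by
    rintro c T ⟨g₁, g₂, g₃, h⟩
    refine ⟨c • g₁, c • g₂, c • g₃, fun x y z => ?_⟩
    simp only [Pi.smul_apply, smul_eq_mul, h, mul_add, mul_sum, mul_left_comm c]

variable {f₁ : M₁ → α → R} {f₂ : M₂ → β → R} {f₃ : M₃ → γ → R}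

lemma slice_fst_mem_sliceSpan (m : M₁) (g : β → γ → R) :
    (fun x y z => f₁ m x * g y z) ∈ sliceSpan f₁ f₂ f₃ := by
  classical
  refine ⟨Pi.single m g, 0, 0, fun x y z => ?_⟩
  rw [Fintype.sum_eq_single m fun m' hm' => by simp [hm']]
  simp

lemma slice_snd_mem_sliceSpan (m : M₂) (g : α → γ → R) :
    (fun x y z => f₂ m y * g x z) ∈ sliceSpan f₁ f₂ f₃ := by
  classical
  refine ⟨0, Pi.single m g, 0, fun x y z => ?_⟩
  rw [Fintype.sum_eq_single (f := fun m' => f₂ m' y * _) m fun m' hm' => by simp [hm']]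
  simp

lemma slice_trd_mem_sliceSpan (m : M₃) (g : α → β → R) :
    (fun x y z => f₃ m z * g x y) ∈ sliceSpan f₁ f₂ f₃ := by
  classical
  refine ⟨0, 0, Pi.single m g, fun x y z => ?_⟩
  rw [Fintype.sum_eq_single (f := fun m' => f₃ m' z * _) m fun m' hm' => by simp [hm']]
  simp

lemma comp_mem_sliceSpan {α' β' γ' : Type*} {T : α → β → γ → R} (hT : T ∈ sliceSpan f₁ f₂ f₃)
    (u : α' → α) (v : β' → β) (w : γ' → γ) :
    (fun x y z => T (u x) (v y) (w z)) ∈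
      sliceSpan (fun m => f₁ m ∘ u) (fun m => f₂ m ∘ v) (fun m => f₃ m ∘ w) := by
  obtain ⟨g₁, g₂, g₃, h⟩ := hT
  exact ⟨fun m y z => g₁ m (v y) (w z), fun m x z => g₂ m (u x) (w z),
    fun m x y => g₃ m (u x) (v y), fun x y z => h (u x) (v y) (w z)⟩

end SliceSpan

section Diagonal

variable {K α β γ M₁ M₂ M₃ : Type*} [Field K]

lemma exists_mem_finrank_le_ncard_support_s10 [Finite α] (W : Submodule K (α → K)) :
    ∃ h ∈ W, Module.finrank K W ≤ h.support.ncard := by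
  classical
  have := Fintype.ofFinite α
  obtain ⟨h, hW, hmax⟩ :=
    exists_maximalFor_of_wellFoundedGT (· ∈ W) Function.support ⟨0, W.zero_mem⟩
  refine ⟨h, hW, ?_⟩
  by_contra! hlt
  let restrict : W →ₗ[K] (h.support → K) :=
    (LinearMap.funLeft K K Subtype.val).comp W.subtype
  have hker : LinearMap.ker restrict ≠ ⊥ := by
    apply LinearMap.ker_ne_bot_of_finrank_lt
    rwa [Module.finrank_fintype_fun_eq_card, ← Nat.card_eq_fintype_card, Nat.card_coe_set_eq]
  obtain ⟨g, hg, hg0⟩ := (Submodule.ne_bot_iff _).1 hker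
  have hgh (a) (ha : h a ≠ 0) : g.1 a = 0 := congrFun (LinearMap.mem_ker.1 hg) ⟨a, ha⟩
  -- Adding `g`, which vanishes on the support of `h`, enlarges that support.
  have hsupp : h.support ⊆ (h + g.1).support := fun a ha => by
    simpa [hgh a ha] using ha
  refine hg0 (Subtype.ext (funext fun a => ?_))
  by_contra hga
  have hha : h a = 0 := not_not.1 fun ha => hga (hgh a ha)
  exact hmax (W.add_mem hW g.2) hsupp (a := a) (by simpa [hha] using hga) hha

variable [Fintype α] [Fintype M₁] [Fintype M₂] [Fintype M₃]

lemma rank_contraction_le [Fintype γ] {f₁ : M₁ → α → K} {f₂ : M₂ → β → K} {f₃ : M₃ → γ → K}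
    {T : α → β → γ → K} (hT : T ∈ sliceSpan f₁ f₂ f₃)
    {h : α → K} (hh : ∀ m, f₁ m ⬝ᵥ h = 0) :
    (Matrix.of fun y z => ∑ x, h x * T x y z).rank ≤ Fintype.card M₂ + Fintype.card M₃ := by
  obtain ⟨g₁, g₂, g₃, hT⟩ := hT
  have hfst (y z) : ∑ x, h x * ∑ m, f₁ m x * g₁ m y z = 0 := by
    simp only [mul_sum]
    rw [sum_comm]
    refine sum_eq_zero fun m _ => ?_
    rw [← zero_mul (g₁ m y z), ← hh m, dotProduct, sum_mul]
    exact sum_congr rfl fun x _ => by ring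
  have hfactor : (Matrix.of fun y z => ∑ x, h x * T x y z) =
      Matrix.fromCols (Matrix.of fun y m => f₂ m y) (Matrix.of fun y m => ∑ x, h x * g₃ m x y) *
        Matrix.fromRows (Matrix.of fun m z => ∑ x, h x * g₂ m x z)
          (Matrix.of fun m z => f₃ m z) := by
    ext y z
    rw [Matrix.fromCols_mul_fromRows]
    simp only [Matrix.add_apply, Matrix.mul_apply, Matrix.of_apply, hT, mul_add, sum_add_distrib,
      hfst, zero_add]
    simp only [mul_sum, sum_mul]
    congr 1 <;> rw [sum_comm] <;>
      exact sum_congr rfl fun m _ => sum_congr rfl fun x _ => by ring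
  rw [hfactor, ← Fintype.card_sum]
  exact (Matrix.rank_mul_le_left _ _).trans (Matrix.rank_le_card_width _)

lemma exists_orthogonal_card_le_add_ncard_support (f : M₁ → α → K) :
    ∃ h : α → K, (∀ m, f m ⬝ᵥ h = 0) ∧
      Fintype.card α ≤ Fintype.card M₁ + h.support.ncard := by
  let L : (α → K) →ₗ[K] (M₁ → K) := (Matrix.of f).mulVecLin
  obtain ⟨h, hL, hcard⟩ := exists_mem_finrank_le_ncard_support_s10 (LinearMap.ker L)
  refine ⟨h, congrFun (LinearMap.mem_ker.1 hL), ?_⟩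
  have hrange : Module.finrank K (LinearMap.range L) ≤ Fintype.card M₁ := by
    simpa using Submodule.finrank_le (LinearMap.range L)
  have hdim := LinearMap.finrank_range_add_finrank_ker L
  rw [Module.finrank_fintype_fun_eq_card] at hdim
  lia

theorem card_le_of_diagonal_mem_sliceSpan [DecidableEq α] {f₁ : M₁ → α → K} {f₂ : M₂ → α → K}
    {f₃ : M₃ → α → K}
    (hT : (fun x y z => if x = y ∧ y = z then 1 else 0) ∈ sliceSpan f₁ f₂ f₃) :
    Fintype.card α ≤ Fintype.card M₁ + (Fintype.card M₂ + Fintype.card M₃) := by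
  classical
  obtain ⟨h, hh, hcard⟩ := exists_orthogonal_card_le_add_ncard_support f₁
  have hdiag : (Matrix.of fun y z => ∑ x, h x * if x = y ∧ y = z then 1 else 0) =
      Matrix.diagonal h := by
    ext y z
    by_cases hyz : y = z <;> simp [hyz]
  have hrank := rank_contraction_le hT hh
  rw [hdiag, Matrix.rank_diagonal, ← Nat.card_eq_fintype_card] at hrank
  exact hcard.trans (Nat.add_le_add_left hrank _)

end Diagonal

section LightExponents

variable (ι : Type*) [Fintype ι] [DecidableEq ι]

/-- Exponents of the monomials in the variables `ι` whose degree in each variable is at most `D`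
and whose total degree is at most a third of the largest possible value `D * |ι|`. -/
def lightExponents (D : ℕ) : Finset (ι → ℕ) :=
  {m ∈ Fintype.piFinset fun _ => range (D + 1) | 3 * ∑ i, m i ≤ D * Fintype.card ι}

variable {ι} {D : ℕ}

lemma exists_mem_lightExponents {t : ι → Fin 3 → ℕ} (ht : ∀ i, ∑ j, t i j ≤ D) :
    ∃ j, (fun i => t i j) ∈ lightExponents ι D := by
  have hle (i j) : t i j ≤ D := (single_le_sum (fun _ _ => Nat.zero_le _) (mem_univ j)).trans (ht i)
  have htotal : ∑ j, ∑ i, t i j ≤ D * Fintype.card ι := by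
    rw [sum_comm, mul_comm]
    exact sum_le_card_nsmul univ _ _ fun i _ => ht i
  simp only [lightExponents, mem_filter, Fintype.mem_piFinset, mem_range, Nat.lt_succ_iff, hle,
    implies_true, true_and]
  by_contra! hheavy
  have := hheavy 0
  have := hheavy 1
  have := hheavy 2
  rw [Fin.sum_univ_three] at htotal
  lia

lemma one_le_prod_pow_mul_rpow_of_mem_lightExponents {x : ℝ} (hx₀ : 0 < x) (hx₁ : x ≤ 1)
    {m : ι → ℕ} (hm : m ∈ lightExponents ι D) :
    1 ≤ (∏ i, x ^ m i) * (x ^ (-(D : ℝ) / 3)) ^ Fintype.card ι := by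
  have hdeg : (3 : ℝ) * (∑ i, m i : ℕ) ≤ D * Fintype.card ι := mod_cast (mem_filter.1 hm).2
  rw [prod_pow_eq_pow_sum, ← Real.rpow_natCast, ← Real.rpow_natCast, ← Real.rpow_mul hx₀.le,
    ← Real.rpow_add hx₀]
  exact Real.one_le_rpow_of_pos_of_le_one_of_nonpos hx₀ hx₁ (by linarith)

lemma card_lightExponents_le {x : ℝ} (hx₀ : 0 < x) (hx₁ : x ≤ 1) :
    (#(lightExponents ι D) : ℝ) ≤
      ((∑ j ∈ range (D + 1), x ^ j) * x ^ (-(D : ℝ) / 3)) ^ Fintype.card ι :=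
  let w := (x ^ (-(D : ℝ) / 3)) ^ Fintype.card ι
  calc (#(lightExponents ι D) : ℝ)
    _ = ∑ m ∈ lightExponents ι D, 1 := by simp
    _ ≤ ∑ m ∈ lightExponents ι D, (∏ i, x ^ m i) * w :=
      sum_le_sum fun m hm => one_le_prod_pow_mul_rpow_of_mem_lightExponents hx₀ hx₁ hm
    _ ≤ ∑ m ∈ Fintype.piFinset fun _ : ι => range (D + 1), (∏ i, x ^ m i) * w :=
      sum_le_sum_of_subset_of_nonneg (filter_subset _ _) fun m _ _ => by positivity
    _ = ((∑ j ∈ range (D + 1), x ^ j) * x ^ (-(D : ℝ) / 3)) ^ Fintype.card ι := by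
      rw [← sum_mul, ← prod_univ_sum, prod_const, card_univ, mul_pow]

end LightExponents

section PolynomialTensor

variable {R ι : Type*} [CommSemiring R] [Fintype ι] [DecidableEq ι] {D : ℕ}

/-- The monomial with exponent `m`, as a function on `ι → R`. -/
def lightMonomial (m : lightExponents ι D) (x : ι → R) : R := ∏ i, x i ^ m.1 i

lemma prod_pow_mem_sliceSpan {t : ι → Fin 3 → ℕ} (ht : ∀ i, ∑ j, t i j ≤ D) :
    (fun x y z : ι → R => ∏ i, x i ^ t i 0 * y i ^ t i 1 * z i ^ t i 2) ∈
      sliceSpan (lightMonomial (D := D)) (lightMonomial (D := D)) (lightMonomial (D := D)) := by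
  simp only [prod_mul_distrib]
  obtain ⟨j, hj⟩ := exists_mem_lightExponents ht
  fin_cases j
  · convert slice_fst_mem_sliceSpan (⟨_, hj⟩ : lightExponents ι D)
      fun (y z : ι → R) => (∏ i, y i ^ t i 1) * ∏ i, z i ^ t i 2 using 4
    exact mul_assoc _ _ _
  · convert slice_snd_mem_sliceSpan (⟨_, hj⟩ : lightExponents ι D)
      fun (x z : ι → R) => (∏ i, x i ^ t i 0) * ∏ i, z i ^ t i 2 using 4
    exact mul_right_comm _ _ _ |>.trans (mul_comm _ _)
  · convert slice_trd_mem_sliceSpan (⟨_, hj⟩ : lightExponents ι D)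
      fun (x y : ι → R) => (∏ i, x i ^ t i 0) * ∏ i, y i ^ t i 1 using 4
    exact mul_comm _ _

lemma prod_eval_mem_sliceSpan {P : MvPolynomial (Fin 3) R} (hP : P.totalDegree ≤ D) :
    (fun x y z : ι → R => ∏ i, eval ![x i, y i, z i] P) ∈
      sliceSpan (lightMonomial (D := D)) (lightMonomial (D := D)) (lightMonomial (D := D)) := by
  have hexpand : (fun x y z : ι → R => ∏ i, eval ![x i, y i, z i] P) =
      ∑ t ∈ Fintype.piFinset fun _ : ι => P.support, (∏ i, P.coeff (t i)) •
        fun x y z => ∏ i, x i ^ t i 0 * y i ^ t i 1 * z i ^ t i 2 := by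
    ext x y z
    simp [eval_eq', prod_univ_sum, prod_mul_distrib, Fin.prod_univ_three]
  rw [hexpand]
  refine Submodule.sum_mem _ fun t ht => Submodule.smul_mem _ _ (prod_pow_mem_sliceSpan fun i => ?_)
  rw [← Finsupp.sum_fintype (t i) (fun _ e => e) fun _ => rfl]
  exact (le_totalDegree (Fintype.mem_piFinset.1 ht i)).trans hP

end PolynomialTensor

section FiniteField

variable (K : Type*) [Field K] [Fintype K]

/-- The polynomial in three variables whose value at `(a, b, c)` is `1` if `a, b, c` is an
arithmetic progression and `0` otherwise. -/
noncomputable def apIndicator : MvPolynomial (Fin 3) K :=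
  1 - (X 0 + X 2 - (X 1 + X 1)) ^ (Fintype.card K - 1)

lemma totalDegree_apIndicator_le : (apIndicator K).totalDegree ≤ Fintype.card K - 1 := by
  have hX (i j : Fin 3) : (X i + X j : MvPolynomial (Fin 3) K).totalDegree ≤ 1 :=
    (totalDegree_add _ _).trans (by simp)
  have hlin : (X 0 + X 2 - (X 1 + X 1) : MvPolynomial (Fin 3) K).totalDegree ≤ 1 :=
    (totalDegree_sub _ _).trans (max_le (hX 0 2) (hX 1 1))
  refine (totalDegree_sub _ _).trans (max_le (by simp) ((totalDegree_pow _ _).trans ?_))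
  simpa using Nat.mul_le_mul_left (Fintype.card K - 1) hlin

variable {K} {ι : Type*} [Fintype ι]

lemma eval_apIndicator [DecidableEq K] (a b c : K) :
    eval ![a, b, c] (apIndicator K) = if a + c = b + b then 1 else 0 := by
  have hq : Fintype.card K - 1 ≠ 0 := (Nat.sub_pos_of_lt Fintype.one_lt_card).ne'
  have heval : eval ![a, b, c] (apIndicator K) =
      1 - (a + c - (b + b)) ^ (Fintype.card K - 1) := by
    simp [apIndicator]
  rw [heval]
  split_ifs with h
  · rw [sub_eq_zero.2 h, zero_pow hq, sub_zero]
  · rw [FiniteField.pow_card_sub_one_eq_one _ (sub_ne_zero.2 h), sub_self]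

lemma prod_eval_apIndicator [DecidableEq K] (x y z : ι → K) :
    ∏ i, eval ![x i, y i, z i] (apIndicator K) = if x + z = y + y then 1 else 0 := by
  simp only [eval_apIndicator, prod_ite_zero, prod_const_one, mem_univ, true_imp_iff, funext_iff,
    Pi.add_apply]

theorem card_le_three_mul_card_lightExponents_of_threeAPFree [DecidableEq ι] {F : Finset (ι → K)}
    (hF : ThreeAPFree (F : Set (ι → K))) :
    #F ≤ 3 * #(lightExponents ι (Fintype.card K - 1)) := by
  classical
  have hdiag : (fun x y z : F => ∏ i, eval ![x.1 i, y.1 i, z.1 i] (apIndicator K)) =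
      fun x y z => if x = y ∧ y = z then 1 else 0 := by
    ext x y z
    rw [prod_eval_apIndicator]
    refine if_congr ⟨fun h => ?_, ?_⟩ rfl rfl
    · exact ⟨Subtype.ext (hF x.2 y.2 z.2 h), Subtype.ext (hF.eq_right x.2 y.2 z.2 h)⟩
    · rintro ⟨rfl, rfl⟩
      rfl
  have hcard := card_le_of_diagonal_mem_sliceSpan <| hdiag ▸
    comp_mem_sliceSpan (prod_eval_mem_sliceSpan (totalDegree_apIndicator_le K))
      (Subtype.val : F → ι → K) Subtype.val Subtype.val
  simp only [Fintype.card_coe] at hcard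
  lia

end FiniteField

lemma exists_threeAPFree_card_eq_pow {G ι : Type*} [AddCommMonoid G] {F : Finset (ι → G)}
    (hF : ThreeAPFree (F : Set (ι → G))) (k : ℕ) :
    ∃ F' : Finset (Fin k × ι → G), ThreeAPFree (F' : Set (Fin k × ι → G)) ∧ #F' = #F ^ k := by
  classical
  let e := (LinearEquiv.curry ℕ G (Fin k) ι).symm
  refine ⟨(Fintype.piFinset fun _ => F).map e.toEquiv.toEmbedding, ?_, by simp⟩
  rw [coe_map, Fintype.coe_piFinset]
  exact (threeAPFree_pi fun _ => hF).image' e e.injective.injOn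

lemma le_of_forall_pow_le_mul_pow {𝕜 : Type*} [Field 𝕜] [LinearOrder 𝕜] [IsStrictOrderedRing 𝕜]
    [Archimedean 𝕜] {a b C : 𝕜} (hb : 0 ≤ b) (h : ∀ k : ℕ, a ^ k ≤ C * b ^ k) : a ≤ b := by
  by_contra! hab
  rcases hb.eq_or_lt with rfl | hb
  · simpa [hab.not_ge] using h 1
  · obtain ⟨k, hk⟩ := pow_unbounded_of_one_lt C ((one_lt_div hb).2 hab)
    rw [div_pow, lt_div_iff₀ (by positivity)] at hk
    exact hk.not_ge (h k)

section EgJ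

/-- The function of `x` whose infimum over `0 < x < 1` is `egJ q * q`. -/
noncomputable def egRatio (q x : ℝ) : ℝ := (1 - x ^ q) / (1 - x) * x ^ (-(q - 1) / 3)

lemma egRatio_nonneg {q x : ℝ} (hq : 0 ≤ q) (hx : x ∈ Set.Ioo 0 1) : 0 ≤ egRatio q x :=
  mul_nonneg (div_nonneg (sub_nonneg.2 (Real.rpow_le_one hx.1.le hx.2.le hq))
    (sub_nonneg.2 hx.2.le)) (Real.rpow_nonneg hx.1.le _)

lemma egRatio_natCast_add_one (D : ℕ) {x : ℝ} (hx : x ≠ 1) :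
    egRatio (D + 1) x = (∑ j ∈ range (D + 1), x ^ j) * x ^ (-(D : ℝ) / 3) := by
  rw [egRatio, geom_sum_eq hx, ← neg_div_neg_eq, neg_sub, neg_sub, add_sub_cancel_right]
  norm_cast

lemma egJ_mul_self {q : ℝ} (hq : q ≠ 0) : egJ q * q = sInf (egRatio q '' Set.Ioo 0 1) := by
  have himage : egRatio q '' Set.Ioo 0 1 = {y : ℝ | ∃ x : ℝ, 0 < x ∧ x < 1 ∧
      y = ((1 - x ^ q) / (1 - x)) * x ^ (-(q - 1) / 3)} := by
    ext y
    simp only [egRatio, Set.mem_image, Set.mem_Ioo, Set.mem_ofPred_eq, and_assoc, eq_comm]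
  rw [himage, egJ, one_div, mul_right_comm, inv_mul_cancel₀ hq, one_mul]

lemma le_egJ_mul_self_pow {q a : ℝ} (hq : 0 < q) (n : ℕ)
    (h : ∀ x ∈ Set.Ioo 0 1, a ≤ egRatio q x ^ n) : a ≤ (egJ q * q) ^ n := by
  have hne : (egRatio q '' Set.Ioo 0 1).Nonempty := (Set.nonempty_Ioo.2 one_pos).image _
  have hbdd : BddBelow (egRatio q '' Set.Ioo 0 1) :=
    ⟨0, Set.forall_mem_image.2 fun _ hx => egRatio_nonneg hq.le hx⟩
  have hclosed : IsClosed {y : ℝ | a ≤ y ^ n} := isClosed_le continuous_const (continuous_pow n)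
  rw [egJ_mul_self hq.ne']
  exact hclosed.closure_subset_iff.2 (Set.image_subset_iff.2 h) (csInf_mem_closure hne hbdd)

end EgJ

section Sunflower

lemma not_exactlyTwoEq_of_add_eq {G : Type*} [Add G] [IsCancelAdd G]
    (hG : Function.Injective fun g : G => g + g) {a b c : G} (h : a + c = b + b) :
    ¬ ExactlyTwoEq a b c := by
  rintro (⟨rfl, hac⟩ | ⟨rfl, hab⟩ | ⟨rfl, hab⟩)
  · exact hac (add_left_cancel h).symm
  · exact hab (hG h)
  · exact hab (add_right_cancel h)

lemma SunflowerFreeZMod.threeAPFree {D n : ℕ} (hD : Odd D) {F : Finset (Fin n → ZMod D)}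
    (hF : SunflowerFreeZMod D n F) : ThreeAPFree (F : Set (Fin n → ZMod D)) := by
  have hdouble : Function.Injective fun g : ZMod D => g + g := by
    have htwo : IsUnit (2 : ZMod D) :=
      mod_cast (ZMod.isUnit_iff_coprime 2 D).2 (Nat.coprime_two_left.2 hD)
    simpa only [two_mul] using htwo.mul_right_injective
  intro a ha b hb c hc h
  by_contra hab
  have hbc : b ≠ c := by
    rintro rfl
    exact hab (add_right_cancel h)
  have hac : a ≠ c := by
    rintro rfl
    exact hab (funext fun i => hdouble (congrFun h i))
  obtain ⟨i, hi⟩ := hF a ha b hb c hc hab hbc hac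
  exact not_exactlyTwoEq_of_add_eq hdouble (congrFun h i) hi

end Sunflower

theorem ellenberg_gijswijt_sunflowerFree_bound_general {K ι : Type*} [Field K] [Fintype K]
    [Fintype ι] {F : Finset (ι → K)} (hF : ThreeAPFree (F : Set (ι → K))) :
    (#F : ℝ) ≤ (egJ (Fintype.card K) * Fintype.card K) ^ Fintype.card ι := by
  classical
  obtain ⟨D, hD⟩ := Nat.exists_eq_succ_of_ne_zero (Fintype.card_ne_zero (α := K))
  refine le_egJ_mul_self_pow (mod_cast Fintype.card_pos) _ fun x hx => ?_
  have hratio : 0 ≤ egRatio (Fintype.card K) x := egRatio_nonneg (Nat.cast_nonneg _) hx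
  refine le_of_forall_pow_le_mul_pow (C := 3) (by positivity) fun k => ?_
  obtain ⟨F', hF', hcard⟩ := exists_threeAPFree_card_eq_pow hF k
  have hlight : #F' ≤ 3 * #(lightExponents (Fin k × ι) D) := by
    simpa [hD] using card_le_three_mul_card_lightExponents_of_threeAPFree hF'
  calc (#F : ℝ) ^ k
    _ = #F' := mod_cast hcard.symm
    _ ≤ 3 * #(lightExponents (Fin k × ι) D) := mod_cast hlight
    _ ≤ 3 * egRatio (Fintype.card K) x ^ Fintype.card (Fin k × ι) := by
      rw [hD, Nat.cast_succ, egRatio_natCast_add_one D hx.2.ne]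
      gcongr
      exact card_lightExponents_le hx.1 hx.2.le
    _ = 3 * (egRatio (Fintype.card K) x ^ Fintype.card ι) ^ k := by
      rw [Fintype.card_prod, Fintype.card_fin, mul_comm k, pow_mul]

theorem ellenberg_gijswijt_sunflowerFree_bound (p : ℕ) (hp : p.Prime) (hp2 : 2 < p)
    (n : ℕ) (hn : 1 ≤ n)
    (F : Finset (Fin n → ZMod p)) (hF : SunflowerFreeZMod p n F) :
    (F.card : ℝ) ≤ (egJ p * p) ^ n := by
  have := Fact.mk hp
  simpa using ellenberg_gijswijt_sunflowerFree_bound_general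
    (hF.threeAPFree (hp.odd_of_ne_two hp2.ne'))
end
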